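/- arXiv:1603.09182 — 2 statements merged into one kernel-verified Lean document; each statement's English description precedes it below -/
import Mathlib

section
/- Let μ ∈ (1/2, 1) and u, v ∈ C_0^∞(a,b). Then ∫_a^b ({}_aD_x^{2μ} u)(x) v(x) dx = ∫_a^b ({}_aD_x^{μ} u)(x) ({}_xD_b^{μ} v)(x) dx, where {}_aD_x^{μ} and {}_xD_b^{μ} denote the left and right Riemann–Liouville fractional derivatives of order μ, and {}_aD_x^{2μ} the left fractional derivative of order 2μ ∈ (1,2). -/
open MeasureTheory intervalIntegral Set Real

/-- Truncated power kernel. -/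
noncomputable def fker (α L : ℝ) : ℝ → ℝ := (Ioo 0 L).indicator (fun t => t ^ α)

/-- Real convolution. -/
noncomputable def cv (f g : ℝ → ℝ) : ℝ → ℝ :=
  convolution f g (ContinuousLinearMap.mul ℝ ℝ) volume

lemma cv_apply (f g : ℝ → ℝ) (x : ℝ) : cv f g x = ∫ t, f t * g (x - t) := rfl

lemma cv_swap (f g : ℝ → ℝ) (x : ℝ) : cv f g x = ∫ t, f (x - t) * g t :=
  convolution_eq_swap _

lemma fker_integrable {α : ℝ} (L : ℝ) (hα : -1 < α) : Integrable (fker α L) := by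
  unfold fker
  rw [integrable_indicator_iff measurableSet_Ioo]
  rcases le_total L 0 with h | h
  · simp [Ioo_eq_empty_of_le h]
  · have := (intervalIntegrable_rpow' (a := 0) (b := L) hα)
    rw [intervalIntegrable_iff_integrableOn_Ioo_of_le h] at this
    exact this

lemma fker_compact (α L : ℝ) : HasCompactSupport (fker α L) := by
  refine HasCompactSupport.intro (isCompact_Icc (a := 0) (b := L)) ?_
  intro x hx
  exact indicator_of_notMem (fun h => hx (Ioo_subset_Icc_self h)) _

lemma left_eq {a b y α : ℝ} {w : ℝ → ℝ} (hw : ∀ s ≤ a, w s = 0) (hy : y ∈ Ioo a b) :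
    ∫ s in a..y, (y - s) ^ α * w s = cv (fker α (b - a)) w y := by
  rw [cv_swap, intervalIntegral.integral_of_le hy.1.le, integral_Ioc_eq_integral_Ioo,
    ← MeasureTheory.integral_indicator measurableSet_Ioo]
  congr 1
  ext s
  by_cases h1 : s ≤ a
  · simp [hw s h1, indicator]
  by_cases h2 : s < y
  · have : y - s ∈ Ioo 0 (b - a) := ⟨by linarith, by linarith [hy.2]⟩
    rw [indicator_of_mem (show s ∈ Ioo a y from ⟨not_le.1 h1, h2⟩), fker, indicator_of_mem this]
  · rw [indicator_of_notMem (fun h => h2 h.2), fker,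
      indicator_of_notMem (fun h => h2 (by linarith [h.1])), zero_mul]

lemma right_eq {a b y α : ℝ} {w : ℝ → ℝ} (hw : ∀ s, b ≤ s → w s = 0) (hy : y ∈ Ioo a b) :
    ∫ s in y..b, (s - y) ^ α * w s = cv (fun t => fker α (b - a) (-t)) w y := by
  rw [cv_swap, intervalIntegral.integral_of_le hy.2.le, integral_Ioc_eq_integral_Ioo,
    ← MeasureTheory.integral_indicator measurableSet_Ioo]
  congr 1
  ext s
  rw [neg_sub]
  by_cases h1 : b ≤ s
  · simp [hw s h1, indicator]
  by_cases h2 : y < s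
  · have : s - y ∈ Ioo 0 (b - a) := ⟨by linarith, by linarith [hy.1]⟩
    rw [indicator_of_mem (show s ∈ Ioo y b from ⟨h2, not_le.1 h1⟩), fker, indicator_of_mem this]
  · rw [indicator_of_notMem (fun h => h2 h.1), fker,
      indicator_of_notMem (fun h => h2 (by linarith [h.1])), zero_mul]

lemma cv_deriv {f g : ℝ → ℝ} (hf : Integrable f) (hc : HasCompactSupport g)
    (hg : ContDiff ℝ 1 g) (x : ℝ) : HasDerivAt (cv f g) (cv f (deriv g) x) x :=
  hc.hasDerivAt_convolution_right _ hf.locallyIntegrable hg x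

lemma cv_cont {f g : ℝ → ℝ} (hf : Integrable f) (hc : HasCompactSupport g)
    (hg : Continuous g) : Continuous (cv f g) :=
  hc.continuous_convolution_right _ hf.locallyIntegrable hg

lemma cv_left_zero {a x α L : ℝ} {w : ℝ → ℝ} (hw : ∀ s ≤ a, w s = 0) (hx : x ≤ a) :
    cv (fker α L) w x = 0 := by
  rw [cv_apply]
  refine integral_eq_zero_of_ae (Filter.Eventually.of_forall fun t => ?_)
  by_cases h : 0 < t
  · simp [hw (x - t) (by linarith)]
  · simp [fker, h]

lemma cv_right_zero {b x α L : ℝ} {w : ℝ → ℝ} (hw : ∀ s, b ≤ s → w s = 0) (hx : b ≤ x) :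
    cv (fun t => fker α L (-t)) w x = 0 := by
  rw [cv_apply]
  refine integral_eq_zero_of_ae (Filter.Eventually.of_forall fun t => ?_)
  by_cases h : t < 0
  · simp [hw (x - t) (by linarith)]
  · simp [fker, h]

lemma cv_assoc {k g : ℝ → ℝ} (hk : Integrable k) (hkc : HasCompactSupport k)
    (hgc : HasCompactSupport g) (hg : Continuous g) (x : ℝ) :
    cv (cv k k) g x = cv k (cv k g) x := by
  refine convolution_assoc _ _ _ _ (fun x y z => by simp [mul_assoc]) hk.aestronglyMeasurable
    hk.aestronglyMeasurable hg.aestronglyMeasurable (hk.ae_convolution_exists _ hk) ?_ ?_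
  · exact Filter.Eventually.of_forall
      (hgc.norm.convolutionExists_right _ hk.norm.locallyIntegrable hg.norm)
  · exact (hkc.norm.convolution _ hgc.norm).convolutionExists_right _ hk.norm.locallyIntegrable
      (hgc.norm.continuous_convolution_right _ hk.norm.locallyIntegrable hg.norm) x

lemma cv_adj {k H g : ℝ → ℝ} (hk : Integrable k) (hH : Integrable H)
    (hgc : HasCompactSupport g) (hg : Continuous g) :
    ∫ x, H x * cv (fun t => k (-t)) g x = ∫ x, cv k H x * g x := by
  obtain ⟨C, hC⟩ := hgc.exists_bound_of_continuous hg
  have h1 : Integrable (fun p : ℝ × ℝ => H p.2 * k (p.1 - p.2)) (volume.prod volume) :=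
    hH.convolution_integrand (ContinuousLinearMap.mul ℝ ℝ) hk
  have h2 : Integrable (Function.uncurry fun s x : ℝ => H x * k (s - x) * g s)
      (volume.prod volume) :=
    h1.mul_bdd (g := fun p : ℝ × ℝ => g p.1)
      (hg.comp continuous_fst).aestronglyMeasurable
      (Filter.Eventually.of_forall fun p => hC p.1)
  have h3 := integral_integral_swap h2
  calc _ = ∫ x, ∫ s, H x * k (s - x) * g s := by
        congr 1
        ext x
        rw [cv_swap, ← MeasureTheory.integral_const_mul]
        congr 1
        ext s
        rw [neg_sub, mul_assoc]
    _ = ∫ s, ∫ x, H x * k (s - x) * g s := h3.symm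
    _ = _ := by
        congr 1
        ext s
        rw [cv_swap, ← MeasureTheory.integral_mul_const]
        congr 1
        ext x
        ring

lemma real_beta {s : ℝ} (hs : 0 < s) {t : ℝ} (ht : 0 < t) :
    ∫ x in 0..t, x ^ (s - 1) * (t - x) ^ (s - 1) =
      t ^ (s + s - 1) * (Real.Gamma s * Real.Gamma s / Real.Gamma (s + s)) := by
  have h := Complex.betaIntegral_scaled s s ht
  rw [Complex.betaIntegral_eq_Gamma_mul_div _ _ (by simpa) (by simpa)] at h
  rw [← Complex.ofReal_inj, ← intervalIntegral.integral_ofReal]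
  rw [← Complex.ofReal_add, Complex.Gamma_ofReal, Complex.Gamma_ofReal] at h
  rw [Complex.ofReal_mul, Complex.ofReal_cpow ht.le]
  push_cast at h ⊢
  rw [← h]
  refine intervalIntegral.integral_congr fun x hx => ?_
  rw [uIcc_of_le ht.le] at hx
  rw [Complex.ofReal_cpow hx.1, Complex.ofReal_cpow (by linarith [hx.2])]
  push_cast
  rfl

lemma ker_conv {μ L t : ℝ} (hμ1 : μ < 1) (ht : t < L) :
    cv (fker (-μ) L) (fker (-μ) L) t =
      (Real.Gamma (1 - μ) * Real.Gamma (1 - μ) / Real.Gamma (2 - 2 * μ)) *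
        fker (1 - 2 * μ) L t := by
  rcases le_or_gt t 0 with h | h
  · rw [cv_left_zero (a := 0) (fun s hs => by simp [fker, not_lt.2 hs]) h]
    simp [fker, not_lt.2 h]
  · have hb := real_beta (s := 1 - μ) (by linarith) h
    rw [show 1 - μ - 1 = -μ by ring, show 1 - μ + (1 - μ) - 1 = 1 - 2 * μ by ring,
      show 1 - μ + (1 - μ) = 2 - 2 * μ by ring] at hb
    simp only [fker]
    rw [indicator_of_mem (show t ∈ Ioo 0 L from ⟨h, ht⟩), mul_comm (_ / _), ← hb, cv_apply,
      intervalIntegral.integral_of_le h.le, integral_Ioc_eq_integral_Ioo,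
      ← MeasureTheory.integral_indicator measurableSet_Ioo]
    congr 1
    ext s
    by_cases h1 : s ∈ Ioo 0 t
    · rw [indicator_of_mem h1, indicator_of_mem (show s ∈ Ioo 0 L from ⟨h1.1, h1.2.trans ht⟩),
        indicator_of_mem (show t - s ∈ Ioo 0 L from ⟨by linarith [h1.2], by linarith [h1.1]⟩)]
    · rw [indicator_of_notMem h1]
      by_cases h2 : 0 < s
      · rw [indicator_of_notMem (s := Ioo 0 L) (a := t - s)
          (fun h3 => h1 ⟨h2, by linarith [h3.1]⟩), mul_zero]
      · rw [indicator_of_notMem (s := Ioo 0 L) (a := s) (fun h3 => h2 h3.1), zero_mul]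

lemma double_ker {a b μ x : ℝ} {w : ℝ → ℝ} (hμ1 : μ < 1)
    (hw : ∀ s ≤ a, w s = 0) (hwc : HasCompactSupport w) (hwcont : Continuous w) (hx : x < b) :
    cv (fker (-μ) (b - a)) (cv (fker (-μ) (b - a)) w) x =
      (Real.Gamma (1 - μ) * Real.Gamma (1 - μ) / Real.Gamma (2 - 2 * μ)) *
        cv (fker (1 - 2 * μ) (b - a)) w x := by
  rw [← cv_assoc (fker_integrable _ (by linarith)) (fker_compact _ _) hwc hwcont, cv_apply,
    cv_apply, ← MeasureTheory.integral_const_mul]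
  congr 1
  ext t
  by_cases h : t < b - a
  · rw [ker_conv hμ1 h, mul_assoc]
  · rw [hw (x - t) (by linarith)]
    simp

/-- For `μ ∈ (1/2, 1)` and `u, v ∈ C_0^∞(a,b)`,
`∫_a^b ({}_aD_x^{2μ} u) v dx = ∫_a^b ({}_aD_x^{μ} u)({}_xD_b^{μ} v) dx`,
where `{}_aD_x^{μ}`, `{}_xD_b^{μ}` are the left and right Riemann–Liouville
fractional derivatives of order `μ` and `{}_aD_x^{2μ}` the left fractional
derivative of order `2μ ∈ (1,2)`. -/
theorem fractional_transfer_of_derivative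
    (a b μ : ℝ) (u v : ℝ → ℝ)
    (hab : a < b) (hμ0 : 1 / 2 < μ) (hμ1 : μ < 1)
    (hu : ContDiff ℝ (⊤ : ℕ∞) u) (husupp : HasCompactSupport u)
    (husub : tsupport u ⊆ Set.Ioo a b)
    (hv : ContDiff ℝ (⊤ : ℕ∞) v) (hvsupp : HasCompactSupport v)
    (hvsub : tsupport v ⊆ Set.Ioo a b) :
    (∫ x in a..b,
        ((1 / Real.Gamma (2 - 2 * μ)) *
            deriv (deriv (fun y => ∫ s in a..y, (y - s) ^ (1 - 2 * μ) * u s)) x)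
          * v x)
      = ∫ x in a..b,
          ((1 / Real.Gamma (1 - μ)) *
              deriv (fun y => ∫ s in a..y, (y - s) ^ (-μ) * u s) x) *
            (-(1 / Real.Gamma (1 - μ)) *
              deriv (fun y => ∫ s in y..b, (s - y) ^ (-μ) * v s) x) := by
  have hu0 : ∀ s, s ∉ Ioo a b → u s = 0 := fun s hs =>
    image_eq_zero_of_notMem_tsupport fun h => hs (husub h)
  have hv0 : ∀ s, s ∉ Ioo a b → v s = 0 := fun s hs =>
    image_eq_zero_of_notMem_tsupport fun h => hs (hvsub h)
  have hu'0 : ∀ s, s ∉ Ioo a b → deriv u s = 0 := fun s hs =>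
    image_eq_zero_of_notMem_tsupport fun h => hs (husub (tsupport_deriv_subset h))
  have hv'0 : ∀ s, s ∉ Ioo a b → deriv v s = 0 := fun s hs =>
    image_eq_zero_of_notMem_tsupport fun h => hs (hvsub (tsupport_deriv_subset h))
  have hu1 : ContDiff ℝ 1 u := hu.of_le (by exact_mod_cast le_top)
  have hv1 : ContDiff ℝ 1 v := hv.of_le (by exact_mod_cast le_top)
  have hu2 : ContDiff ℝ 1 (deriv u) := by
    have h2 : ContDiff ℝ (1 + 1) u := by
      rw [one_add_one_eq_two]
      exact hu.of_le (WithTop.coe_le_coe.2 (le_top : (2 : ℕ∞) ≤ ⊤))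
    exact (contDiff_succ_iff_deriv.1 h2).2.2
  have hv'c : Continuous (deriv v) := hv1.continuous_deriv le_rfl
  have huc' := husupp.deriv
  have hvc' := hvsupp.deriv
  have hk : Integrable (fker (-μ) (b - a)) := fker_integrable _ (by linarith)
  have hK : Integrable (fker (1 - 2 * μ) (b - a)) := fker_integrable _ (by linarith)
  have hkr : Integrable (fun t => fker (-μ) (b - a) (-t)) := hk.comp_neg
  -- derivatives
  have hL : ∀ α, -1 < α → ∀ x ∈ Ioo a b,
      deriv (fun y => ∫ s in a..y, (y - s) ^ α * u s) x = cv (fker α (b - a)) (deriv u) x := by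
    intro α hα x hx
    have : (fun y => ∫ s in a..y, (y - s) ^ α * u s) =ᶠ[nhds x] cv (fker α (b - a)) u := by
      filter_upwards [isOpen_Ioo.mem_nhds hx] with y hy
      exact left_eq (fun s hs => hu0 s fun h => absurd h.1 (not_lt.2 hs)) hy
    rw [this.deriv_eq]
    exact (cv_deriv (fker_integrable _ hα) husupp hu1 x).deriv
  have hR : ∀ x ∈ Ioo a b,
      deriv (fun y => ∫ s in y..b, (s - y) ^ (-μ) * v s) x =
        cv (fun t => fker (-μ) (b - a) (-t)) (deriv v) x := by
    intro x hx
    have : (fun y => ∫ s in y..b, (s - y) ^ (-μ) * v s) =ᶠ[nhds x]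
        cv (fun t => fker (-μ) (b - a) (-t)) v := by
      filter_upwards [isOpen_Ioo.mem_nhds hx] with y hy
      exact right_eq (fun s hs => hv0 s fun h => absurd h.2 (not_lt.2 hs)) hy
    rw [this.deriv_eq]
    exact (cv_deriv hkr hvsupp hv1 x).deriv
  have hLL : ∀ x ∈ Ioo a b,
      deriv (deriv (fun y => ∫ s in a..y, (y - s) ^ (1 - 2 * μ) * u s)) x =
        cv (fker (1 - 2 * μ) (b - a)) (deriv (deriv u)) x := by
    intro x hx
    have : deriv (fun y => ∫ s in a..y, (y - s) ^ (1 - 2 * μ) * u s) =ᶠ[nhds x]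
        cv (fker (1 - 2 * μ) (b - a)) (deriv u) := by
      filter_upwards [isOpen_Ioo.mem_nhds hx] with y hy
      exact hL _ (by linarith) y hy
    rw [this.deriv_eq]
    exact (cv_deriv hK huc' hu2 x).deriv
  -- passing from (a, b) to the line
  have hext : ∀ F : ℝ → ℝ, (∀ x, x ∉ Ioo a b → F x = 0) → ∫ x in a..b, F x = ∫ x, F x := by
    intro F hF
    rw [intervalIntegral.integral_of_le hab.le, integral_Ioc_eq_integral_Ioo]
    exact setIntegral_eq_integral_of_forall_compl_eq_zero fun x hx => hF x hx
  have hcongr : ∀ F G : ℝ → ℝ, (∀ x ∈ Ioo a b, F x = G x) →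
      ∫ x in a..b, F x = ∫ x in a..b, G x := by
    intro F G h
    rw [intervalIntegral.integral_of_le hab.le, intervalIntegral.integral_of_le hab.le,
      integral_Ioc_eq_integral_Ioo, integral_Ioc_eq_integral_Ioo]
    exact setIntegral_congr_fun measurableSet_Ioo h
  have hlhs := hcongr
    (fun x => ((1 / Real.Gamma (2 - 2 * μ)) *
            deriv (deriv (fun y => ∫ s in a..y, (y - s) ^ (1 - 2 * μ) * u s)) x) * v x)
    (fun x => (1 / Real.Gamma (2 - 2 * μ)) *
      (cv (fker (1 - 2 * μ) (b - a)) (deriv (deriv u)) x * v x))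
    (fun x hx => by rw [hLL x hx]; ring)
  have hrhs := hcongr
    (fun x => ((1 / Real.Gamma (1 - μ)) *
              deriv (fun y => ∫ s in a..y, (y - s) ^ (-μ) * u s) x) *
            (-(1 / Real.Gamma (1 - μ)) *
              deriv (fun y => ∫ s in y..b, (s - y) ^ (-μ) * v s) x))
    (fun x => -((1 / Real.Gamma (1 - μ)) * (1 / Real.Gamma (1 - μ))) *
      (cv (fker (-μ) (b - a)) (deriv u) x * cv (fun t => fker (-μ) (b - a) (-t)) (deriv v) x))
    (fun x hx => by rw [hL _ (by linarith) x hx, hR x hx]; ring)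
  rw [hlhs, hrhs, intervalIntegral.integral_const_mul, intervalIntegral.integral_const_mul]
  -- integration by parts
  have hparts : ∫ x in a..b, cv (fker (1 - 2 * μ) (b - a)) (deriv u) x * deriv v x =
      - ∫ x in a..b, cv (fker (1 - 2 * μ) (b - a)) (deriv (deriv u)) x * v x := by
    rw [intervalIntegral.integral_mul_deriv_eq_deriv_mul
      (u' := cv (fker (1 - 2 * μ) (b - a)) (deriv (deriv u)))
      (fun x _ => cv_deriv hK huc' hu2 x)
      (fun x _ => (hv1.differentiable one_ne_zero x).hasDerivAt)
      ((cv_cont hK huc'.deriv (hu2.continuous_deriv le_rfl)).intervalIntegrable _ _)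
      (hv'c.intervalIntegrable _ _)]
    rw [hv0 a (by simp), hv0 b (by simp)]
    simp
  have hmain : ∫ x in a..b, cv (fker (-μ) (b - a)) (deriv u) x *
        cv (fun t => fker (-μ) (b - a) (-t)) (deriv v) x =
      (Real.Gamma (1 - μ) * Real.Gamma (1 - μ) / Real.Gamma (2 - 2 * μ)) *
        ∫ x in a..b, cv (fker (1 - 2 * μ) (b - a)) (deriv u) x * deriv v x := by
    have hul : ∀ s ≤ a, deriv u s = 0 := fun s hs => hu'0 s fun h => absurd h.1 (not_lt.2 hs)
    rw [hext, cv_adj hk _ hvc' hv'c, ← hext, ← intervalIntegral.integral_const_mul]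
    · apply hcongr
      intro x hx
      rw [double_ker hμ1 hul huc' hu2.continuous hx.2, mul_assoc]
    · intro x hx
      rw [hv'0 x hx, mul_zero]
    · exact hk.integrable_convolution _ (hu2.continuous.integrable_of_hasCompactSupport huc')
    · intro x hx
      rcases le_or_gt x a with h | h
      · rw [cv_left_zero hul h, zero_mul]
      · rw [cv_right_zero (b := b) (fun s hs => hv'0 s fun h => absurd h.2 (not_lt.2 hs))
          (not_lt.1 fun h' => hx ⟨h, h'⟩), mul_zero]
  rw [hmain, hparts]
  have hG : Real.Gamma (1 - μ) ≠ 0 := (Real.Gamma_pos_of_pos (by linarith)).ne'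
  have hG2 : Real.Gamma (2 - 2 * μ) ≠ 0 := (Real.Gamma_pos_of_pos (by linarith)).ne'
  field_simp
end

section
/- For μ ∈ (0,1), μ ≠ 1/2, and u smooth with compact support on ℝ, the inner product of left and right fractional derivatives satisfies ( {}_{-∞}D_x^{μ} u, {}_xD_{∞}^{μ} u )_{L^2(ℝ)} = cos(μπ) ‖ {}_{-∞}D_x^{μ} u ‖²_{L^2(ℝ)}. -/
open MeasureTheory Set Real

/-- Left Riemann–Liouville fractional derivative of order `μ ∈ (0,1)` on `ℝ`. -/
noncomputable def leftFracDerivR (μ : ℝ) (u : ℝ → ℝ) (x : ℝ) : ℝ :=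
  (1 / Real.Gamma (1 - μ)) *
    deriv (fun y => ∫ s in Set.Iic y, (y - s) ^ (-μ) * u s) x

/-- Right Riemann–Liouville fractional derivative of order `μ ∈ (0,1)` on `ℝ`. -/
noncomputable def rightFracDerivR (μ : ℝ) (u : ℝ → ℝ) (x : ℝ) : ℝ :=
  -(1 / Real.Gamma (1 - μ)) *
    deriv (fun y => ∫ s in Set.Ici y, (s - y) ^ (-μ) * u s) x


open Filter Topology

/-- Causal power kernel. -/
noncomputable def kk (μ : ℝ) (t : ℝ) : ℝ := if 0 < t then t ^ (-μ) else 0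

/-- Causal power kernel truncated to `(0,1]`. -/
noncomputable def k1 (μ : ℝ) : ℝ → ℝ := Set.indicator (Set.Ioc 0 1) (fun t => t ^ (-μ))

/-- Generalized Cauchy-type transform. -/
noncomputable def FF (μ : ℝ) (v : ℝ → ℝ) (w : ℂ) : ℂ :=
  ∫ s : ℝ, (v s : ℂ) * (w - s * Complex.I) ^ (((-μ : ℝ)) : ℂ)

lemma k1_int {μ : ℝ} (hμ1 : μ < 1) : Integrable (k1 μ) := by
  unfold k1
  rw [integrable_indicator_iff measurableSet_Ioc]
  have := intervalIntegral.intervalIntegrable_rpow' (a := 0) (b := 1) (r := -μ) (by linarith)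
  rwa [intervalIntegrable_iff_integrableOn_Ioc_of_le zero_le_one] at this

lemma k1_nonneg (μ t : ℝ) : 0 ≤ k1 μ t := by
  unfold k1
  apply Set.indicator_nonneg
  intro x hx
  exact Real.rpow_nonneg hx.1.le _

lemma kk_loc {μ : ℝ} (hμ0 : 0 < μ) (hμ1 : μ < 1) : LocallyIntegrable (kk μ) := by
  have h1 : LocallyIntegrable (fun t => k1 μ t + 1) :=
    (k1_int hμ1).locallyIntegrable.add (locallyIntegrable_const 1)
  refine h1.mono ?_ ?_
  · apply Measurable.aestronglyMeasurable
    unfold kk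
    exact Measurable.ite measurableSet_Ioi (by fun_prop) (by fun_prop)
  · refine Eventually.of_forall fun t => ?_
    have h0 := k1_nonneg μ t
    rw [Real.norm_of_nonneg (show 0 ≤ k1 μ t + 1 by linarith)]
    unfold kk
    split_ifs with h
    · rw [Real.norm_of_nonneg (by positivity)]
      by_cases h' : t ≤ 1
      · have : k1 μ t = t ^ (-μ) := by
          unfold k1; rw [Set.indicator_of_mem]; exact ⟨h, h'⟩
        linarith
      · have : t ^ (-μ) ≤ 1 := Real.rpow_le_one_of_one_le_of_nonpos (by linarith) (by linarith)
        linarith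
    · simp only [norm_zero]; linarith

lemma abs_rpow_le {μ : ℝ} (hμ0 : 0 < μ) (t : ℝ) : |t| ^ (-μ) ≤ 1 + (k1 μ t + k1 μ (-t)) := by
  have h0 := k1_nonneg μ t
  have h1 := k1_nonneg μ (-t)
  by_cases h' : 1 ≤ |t|
  · have : |t| ^ (-μ) ≤ 1 := Real.rpow_le_one_of_one_le_of_nonpos h' (by linarith)
    linarith
  · push Not at h'
    rcases lt_trichotomy t 0 with h | h | h
    · have : k1 μ (-t) = |t| ^ (-μ) := by
        rw [abs_of_neg h] at h' ⊢
        unfold k1; rw [Set.indicator_of_mem]; exact ⟨by linarith, by linarith⟩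
      linarith
    · subst h
      rw [abs_zero, Real.zero_rpow (by linarith)]; linarith
    · have : k1 μ t = |t| ^ (-μ) := by
        rw [abs_of_pos h] at h' ⊢
        unfold k1; rw [Set.indicator_of_mem]; exact ⟨by linarith, by linarith⟩
      linarith

/-- dominating function -/
lemma integrand_bound {μ : ℝ} (hμ0 : 0 < μ) {v : ℝ → ℝ} {M : ℝ} (hM : ∀ s, |v s| ≤ M)
    (w : ℂ) (s : ℝ) (hs : w.im ≠ s) :
    ‖(v s : ℂ) * (w - s * Complex.I) ^ (((-μ : ℝ)) : ℂ)‖ ≤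
      |v s| + M * (k1 μ (w.im - s) + k1 μ (-(w.im - s))) := by
  rw [norm_mul, Complex.norm_cpow_real, Complex.norm_real, Real.norm_eq_abs]
  have h1 : |w.im - s| ≤ ‖w - s * Complex.I‖ := by
    simpa using Complex.abs_im_le_norm (w - s * Complex.I)
  have h2 : ‖w - s * Complex.I‖ ^ (-μ) ≤ |w.im - s| ^ (-μ) :=
    Real.rpow_le_rpow_of_nonpos (abs_pos.2 (sub_ne_zero.2 hs)) h1 (by linarith)
  have h3 := abs_rpow_le hμ0 (w.im - s)
  have h4 := k1_nonneg μ (w.im - s)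
  have h5 := k1_nonneg μ (-(w.im - s))
  calc _ ≤ |v s| * (1 + (k1 μ (w.im - s) + k1 μ (-(w.im - s)))) := by
        gcongr; linarith
    _ ≤ _ := by
        rw [mul_add, mul_one]
        gcongr
        exact hM s

lemma dom_int {μ : ℝ} (hμ1 : μ < 1) {v : ℝ → ℝ} (hv : Integrable v) (M a : ℝ) :
    Integrable (fun s => |v s| + M * (k1 μ (a - s) + k1 μ (-(a - s)))) := by
  have h := k1_int hμ1
  refine hv.abs.add (Integrable.const_mul ?_ _)
  exact (h.comp_sub_left a).add ((h.comp_neg).comp_sub_left a)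

lemma dom_integral {μ : ℝ} (hμ1 : μ < 1) {v : ℝ → ℝ} (hv : Integrable v) (M a : ℝ) :
    ∫ s, (|v s| + M * (k1 μ (a - s) + k1 μ (-(a - s)))) = 
      (∫ s, |v s|) + M * ((∫ s, k1 μ s) + ∫ s, k1 μ s) := by
  have h := k1_int hμ1
  have hA := (h.comp_sub_left a)
  have hB := ((h.comp_neg).comp_sub_left a)
  rw [integral_add hv.abs (Integrable.const_mul (f := fun t => k1 μ (a - t) + k1 μ (-(a - t))) (hA.add hB) M), integral_const_mul, integral_add hA hB,
    integral_sub_left_eq_self (k1 μ), integral_sub_left_eq_self (fun s => k1 μ (-s)),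
    integral_neg_eq_self (k1 μ)]

lemma ae_ne' (a : ℝ) : ∀ᵐ s : ℝ, a ≠ s := by
  filter_upwards [Measure.ae_ne volume a] with s hs using hs.symm

lemma FF_bdd {μ : ℝ} (hμ0 : 0 < μ) (hμ1 : μ < 1) {v : ℝ → ℝ} (hv : Integrable v)
    {M : ℝ} (hM : ∀ s, |v s| ≤ M) : ∃ C : ℝ, ∀ w : ℂ, ‖FF μ v w‖ ≤ C := by
  refine ⟨(∫ s, |v s|) + M * ((∫ s, k1 μ s) + ∫ s, k1 μ s), fun w => ?_⟩
  rw [← dom_integral hμ1 hv M w.im]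
  refine norm_integral_le_of_norm_le (dom_int hμ1 hv M w.im) ?_
  filter_upwards [ae_ne' w.im] with s hs using integrand_bound hμ0 hM w s hs

lemma mem_slit {w : ℂ} (hw : 0 < w.re) (s : ℝ) : w - s * Complex.I ∈ Complex.slitPlane := by
  left; simpa using hw

lemma cont_pow {w : ℂ} (hw : 0 < w.re) (c : ℂ) :
    Continuous (fun s : ℝ => (w - s * Complex.I) ^ c) := by
  refine Continuous.cpow (by fun_prop) (by fun_prop) fun s => mem_slit hw s

lemma re_le_norm {w : ℂ} (s : ℝ) : w.re ≤ ‖w - s * Complex.I‖ := by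
  simpa using Complex.re_le_norm (w - s * Complex.I)

lemma FF_diff {μ : ℝ} (hμ0 : 0 < μ) {v : ℝ → ℝ} (hv : Continuous v)
    (hc : HasCompactSupport v) {w : ℂ} (hw : 0 < w.re) : DifferentiableAt ℂ (FF μ v) w := by
  have hball : ∀ z ∈ Metric.ball w (w.re / 2), w.re / 2 < z.re := by
    intro z hz
    have h1 : |(z - w).re| ≤ ‖z - w‖ := Complex.abs_re_le_norm _
    have h2 : ‖z - w‖ < w.re / 2 := by simpa [dist_eq_norm] using hz
    rw [Complex.sub_re] at h1
    have := neg_abs_le (z.re - w.re)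
    linarith
  have hvi := hv.integrable_of_hasCompactSupport hc (μ := volume)
  have hvC : Continuous (fun s => (v s : ℂ)) := by fun_prop
  have hcC : HasCompactSupport (fun s => (v s : ℂ)) := hc.comp_left (g := Complex.ofReal) (by simp)
  refine (hasDerivAt_integral_of_dominated_loc_of_deriv_le (μ := volume) 
    (F := fun (w : ℂ) (s : ℝ) => (v s : ℂ) * (w - s * Complex.I) ^ (((-μ : ℝ)) : ℂ))
    (F' := fun (w : ℂ) (s : ℝ) => (v s : ℂ) * ((((-μ : ℝ)) : ℂ) * (w - s * Complex.I) ^ (((-μ - 1 : ℝ)) : ℂ)))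
    (bound := fun s => |v s| * (μ * (w.re / 2) ^ (-μ - 1)))
    (Metric.ball_mem_nhds w (half_pos hw)) ?_ ?_ ?_ ?_ ?_ ?_).2.differentiableAt
  · filter_upwards [Metric.ball_mem_nhds w (half_pos hw)] with z hz
    have := hball z hz
    exact (hvC.mul (cont_pow (by linarith) _)).aestronglyMeasurable
  · exact (hvC.mul (cont_pow hw _)).integrable_of_hasCompactSupport hcC.mul_right
  · exact (hvC.mul (continuous_const.mul (cont_pow hw _))).aestronglyMeasurable
  · refine Eventually.of_forall fun s z hz => ?_
    have hz' := hball z hz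
    rw [norm_mul, norm_mul, Complex.norm_cpow_real, Complex.norm_real, Complex.norm_real,
      norm_neg, Real.norm_eq_abs, Real.norm_eq_abs, abs_of_pos hμ0]
    gcongr ?_ * (?_ * ?_)
    exact Real.rpow_le_rpow_of_nonpos (by linarith) (hz'.le.trans (re_le_norm s)) (by linarith)
  · exact hvi.abs.mul_const _
  · refine Eventually.of_forall fun s z hz => ?_
    have hz' := hball z hz
    have h1 : HasDerivAt (fun z : ℂ => z - s * Complex.I) 1 z := (hasDerivAt_id z).sub_const _
    have h2 := h1.cpow_const (c := (((-μ : ℝ)) : ℂ)) (mem_slit (by linarith) s)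
    have h3 := h2.const_mul (v s : ℂ)
    refine h3.congr_deriv ?_
    rw [show (((-μ - 1 : ℝ)) : ℂ) = ((-μ : ℝ) : ℂ) - 1 by push_cast; ring]
    ring

lemma FF_parts {μ : ℝ} {u : ℝ → ℝ} (hu : ContDiff ℝ (⊤ : ℕ∞) u) 
    (hc : HasCompactSupport u) {w : ℂ} (hw : 0 < w.re) : 
    FF μ (deriv u) w = - ∫ s : ℝ, ((u s : ℂ)) * (μ * Complex.I * (w - s * Complex.I) ^ (((-μ - 1 : ℝ)) : ℂ)) := by
  have hdu : Continuous (deriv u) := hu.continuous_deriv (by simp)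
  have hvC : Continuous (fun s => ((deriv u s : ℝ) : ℂ)) := by fun_prop
  have hcC : HasCompactSupport (fun s => ((deriv u s : ℝ) : ℂ)) :=
    hc.deriv.comp_left (g := Complex.ofReal) (by simp)
  have huC : Continuous (fun s => (u s : ℂ)) := by have := hu.continuous; fun_prop
  have hcuC : HasCompactSupport (fun s => (u s : ℂ)) :=
    hc.comp_left (g := Complex.ofReal) (by simp)
  have := integral_mul_deriv_eq_deriv_mul_of_integrable (A := ℂ)
    (u := fun s : ℝ => (u s : ℂ)) (u' := fun s => ((deriv u s : ℝ) : ℂ))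
    (v := fun s : ℝ => (w - s * Complex.I) ^ (((-μ : ℝ)) : ℂ))
    (v' := fun s : ℝ => (μ * Complex.I * (w - s * Complex.I) ^ (((-μ - 1 : ℝ)) : ℂ)))
    ?_ ?_ ?_ ?_ ?_
  · rw [this, neg_neg]; rfl
  · intro s _
    exact ((hu.differentiable (by simp) s).hasDerivAt).ofReal_comp
  · intro s _
    have h0 : HasDerivAt (fun s : ℝ => (s : ℂ)) 1 s := (hasDerivAt_id s).ofReal_comp
    have h1 : HasDerivAt (fun s : ℝ => w - (s : ℂ) * Complex.I) (-(1 * Complex.I)) s :=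
      (h0.mul_const _).const_sub _
    have h2 := (Complex.hasStrictDerivAt_cpow_const (c := (((-μ : ℝ)) : ℂ)) (mem_slit hw s)).hasDerivAt.comp s h1
    refine h2.congr_deriv ?_
    rw [show (((-μ - 1 : ℝ)) : ℂ) = ((-μ : ℝ) : ℂ) - 1 by push_cast; ring]
    push_cast
    ring
  · exact (huC.mul (continuous_const.mul (cont_pow hw _))).integrable_of_hasCompactSupport hcuC.mul_right
  · exact (hvC.mul (cont_pow hw _)).integrable_of_hasCompactSupport hcC.mul_right
  · exact (huC.mul (cont_pow hw _)).integrable_of_hasCompactSupport hcuC.mul_right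

lemma FF_decay {μ : ℝ} (hμ0 : 0 < μ) {u : ℝ → ℝ} (hu : ContDiff ℝ (⊤ : ℕ∞) u) 
    (hc : HasCompactSupport u) : ∃ R C : ℝ, 1 ≤ R ∧ 0 ≤ C ∧ ∀ w : ℂ, 0 < w.re → R ≤ ‖w‖ →
      ‖FF μ (deriv u) w‖ ≤ C * ‖w‖⁻¹ := by
  obtain ⟨r, hr⟩ := hc.isCompact.isBounded.exists_norm_le
  refine ⟨2 * max r 1, (∫ s, |u s|) * (2 * μ), by linarith [le_max_right r 1], 
    mul_nonneg (integral_nonneg fun _ => abs_nonneg _) (by linarith), fun w hw hR => ?_⟩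
  have hui := hu.continuous.integrable_of_hasCompactSupport hc (μ := volume)
  rw [FF_parts hu hc hw, norm_neg]
  have hmr := le_max_left r 1
  have hm1 := le_max_right r 1
  have hb : ∀ s : ℝ, ‖((u s : ℂ)) * (μ * Complex.I * (w - s * Complex.I) ^ (((-μ - 1 : ℝ)) : ℂ))‖
      ≤ |u s| * ((2 * μ) * ‖w‖⁻¹) := by
    intro s
    by_cases hs : u s = 0
    · simp [hs]
    have hsr : |s| ≤ r := hr s (subset_tsupport _ hs)
    rw [norm_mul, norm_mul, norm_mul, Complex.norm_cpow_real, Complex.norm_real, Complex.norm_real,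
      Complex.norm_I, Real.norm_eq_abs, Real.norm_eq_abs, abs_of_pos hμ0, mul_one, mul_comm 2 μ, mul_assoc μ 2]
    have h1 : ‖w‖ / 2 ≤ ‖w - s * Complex.I‖ := by
      have := norm_sub_norm_le w (s * Complex.I)
      simp at this
      linarith
    gcongr
    calc ‖w - s * Complex.I‖ ^ (-μ - 1) ≤ (‖w‖/2) ^ (-μ - 1) :=
          Real.rpow_le_rpow_of_nonpos (by linarith) h1 (by linarith)
      _ ≤ (‖w‖/2) ^ (-1 : ℝ) := Real.rpow_le_rpow_of_exponent_le (by linarith) (by linarith)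
      _ = 2 * ‖w‖⁻¹ := by rw [Real.rpow_neg_one, inv_div]; ring
  refine (norm_integral_le_of_norm_le (hui.abs.mul_const _) (Eventually.of_forall hb)).trans ?_
  rw [integral_mul_const]
  exact le_of_eq (by ring)

lemma FF_bound {μ : ℝ} (hμ0 : 0 < μ) (hμ1 : μ < 1) {u : ℝ → ℝ} (hu : ContDiff ℝ (⊤ : ℕ∞) u) 
    (hc : HasCompactSupport u) : ∃ C : ℝ, 0 ≤ C ∧ ∀ w : ℂ, 0 < w.re →
      ‖FF μ (deriv u) w‖ ^ 2 ≤ C * (1 + ‖w‖ ^ 2)⁻¹ := by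
  have hdu : Continuous (deriv u) := hu.continuous_deriv (by simp)
  obtain ⟨R, C, hR, hC, h⟩ := FF_decay hμ0 hu hc
  obtain ⟨M, hM⟩ := hdu.bounded_above_of_compact_support hc.deriv
  obtain ⟨B, hB⟩ := FF_bdd hμ0 hμ1 (hdu.integrable_of_hasCompactSupport hc.deriv) hM
  refine ⟨2 * C ^ 2 + B ^ 2 * (1 + R ^ 2), by positivity, fun w hw => ?_⟩
  rw [← div_eq_mul_inv, le_div_iff₀ (by positivity)]
  by_cases hwR : R ≤ ‖w‖
  · have h1 := h w hw hwR
    have hw1 : 1 ≤ ‖w‖ := hR.trans hwR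
    have h2 : ‖FF μ (deriv u) w‖ * ‖w‖ ≤ C := by
      rw [← div_eq_mul_inv, le_div_iff₀ (by linarith)] at h1
      exact h1
    have h3 : (‖FF μ (deriv u) w‖ * ‖w‖) ^ 2 ≤ C ^ 2 := by gcongr
    have h4 : ‖FF μ (deriv u) w‖ ^ 2 * 1 ≤ ‖FF μ (deriv u) w‖ ^ 2 * ‖w‖ ^ 2 := by
      gcongr; nlinarith
    have h5 : 0 ≤ B ^ 2 * (1 + R ^ 2) := by positivity
    nlinarith
  · push Not at hwR
    have h1 := hB w
    have : ‖FF μ (deriv u) w‖ ^ 2 * (1 + ‖w‖ ^ 2) ≤ B ^ 2 * (1 + R ^ 2) := by gcongr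
    nlinarith [sq_nonneg C]

lemma one_add_im_le (w : ℂ) {C : ℝ} (hC : 0 ≤ C) {a : ℝ} (ha : |a| ≤ ‖w‖) :
    C * (1 + ‖w‖ ^ 2)⁻¹ ≤ C * (1 + a ^ 2)⁻¹ := by
  have : a ^ 2 ≤ ‖w‖ ^ 2 := by rw [← sq_abs a]; gcongr
  gcongr

lemma FF_int_zero {μ : ℝ} (hμ0 : 0 < μ) (hμ1 : μ < 1) {u : ℝ → ℝ} (hu : ContDiff ℝ (⊤ : ℕ∞) u) 
    (hc : HasCompactSupport u) {ε : ℝ} (hε : 0 < ε) :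
    ∫ y : ℝ, (FF μ (deriv u) (ε + y * Complex.I)) ^ 2 = 0 := by
  have hdu : Continuous (deriv u) := hu.continuous_deriv (by simp)
  have hdiff : ∀ w : ℂ, 0 < w.re → DifferentiableAt ℂ (fun w => FF μ (deriv u) w ^ 2) w :=
    fun w hw => (FF_diff hμ0 hdu hc.deriv hw).pow 2
  obtain ⟨C, hC, hb⟩ := FF_bound hμ0 hμ1 hu hc
  have hb' : ∀ w : ℂ, 0 < w.re → ∀ a : ℝ, |a| ≤ ‖w‖ → ‖FF μ (deriv u) w ^ 2‖ ≤ C * (1 + a ^ 2)⁻¹ := by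
    intro w hw a ha
    rw [norm_pow]
    exact (hb w hw).trans (one_add_im_le w hC ha)
  have hint : Integrable (fun y : ℝ => (FF μ (deriv u) (ε + y * Complex.I)) ^ 2) := by
    refine (integrable_inv_one_add_sq.const_mul C).mono' ?_ (Eventually.of_forall fun y => ?_)
    · apply Continuous.aestronglyMeasurable
      rw [continuous_iff_continuousAt]
      intro y
      have h1 := (hdiff (ε + y * Complex.I) (by simpa using hε)).continuousAt
      exact ContinuousAt.comp (f := fun y : ℝ => (ε + y * Complex.I : ℂ)) h1 (by fun_prop)
    · refine hb' _ (by simpa using hε) y ?_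
      simpa using Complex.abs_im_le_norm (ε + y * Complex.I)
  have hlim := intervalIntegral_tendsto_integral hint tendsto_neg_atTop_atBot tendsto_id
  have h0 : Tendsto (fun N : ℝ => ∫ y in (-N)..N, (FF μ (deriv u) (ε + y * Complex.I)) ^ 2) atTop (𝓝 0) := by
    have h4 : Tendsto (fun N : ℝ => (4 * C) * N⁻¹) atTop (𝓝 0) := by
      simpa using tendsto_inv_atTop_zero.const_mul (4 * C)
    refine squeeze_zero_norm' ?_ h4
    filter_upwards [eventually_ge_atTop ε] with N hN
    have hN0 : 0 < N := hε.trans_le hN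
    have hr := Complex.integral_boundary_rect_eq_zero_of_differentiableOn
      (fun w => FF μ (deriv u) w ^ 2) (ε + (-N : ℝ) * Complex.I) (N + N * Complex.I) ?_
    · simp only [Complex.add_re, Complex.ofReal_re, Complex.mul_re, Complex.I_re, mul_zero, 
        Complex.ofReal_im, Complex.I_im, mul_one, sub_self, add_zero, Complex.add_im, 
        Complex.mul_im, zero_add] at hr
      have hN2 : C * (1 + N ^ 2)⁻¹ ≤ C * (N ^ 2)⁻¹ := by gcongr; linarith
      have hmem : ∀ x ∈ Set.uIoc ε N, 0 < x := by
        intro x hx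
        rw [uIoc_of_le hN] at hx
        exact hε.trans hx.1
      have e1 := intervalIntegral.norm_integral_le_of_norm_le_const (a := ε) (b := N) 
        (f := fun x : ℝ => FF μ (deriv u) (x + (-N : ℝ) * Complex.I) ^ 2) (C := C * (1 + N ^ 2)⁻¹) 
        (fun x hx => hb' _ (by simpa using hmem x hx) N (by 
          simpa using Complex.abs_im_le_norm (x + (-N : ℝ) * Complex.I)))
      have e2 := intervalIntegral.norm_integral_le_of_norm_le_const (a := ε) (b := N) 
        (f := fun x : ℝ => FF μ (deriv u) (x + N * Complex.I) ^ 2) (C := C * (1 + N ^ 2)⁻¹) 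
        (fun x hx => hb' _ (by simpa using hmem x hx) N (by 
          simpa using Complex.abs_im_le_norm (x + N * Complex.I)))
      have e3 := intervalIntegral.norm_integral_le_of_norm_le_const (a := -N) (b := N) 
        (f := fun y : ℝ => FF μ (deriv u) (N + y * Complex.I) ^ 2) (C := C * (1 + N ^ 2)⁻¹) 
        (fun y hy => hb' _ (by simpa using hN0) N (by 
          simpa using Complex.abs_re_le_norm (N + y * Complex.I)))
      generalize (∫ x in ε..N, FF μ (deriv u) (x + (-N : ℝ) * Complex.I) ^ 2) = A at *
      generalize (∫ x in ε..N, FF μ (deriv u) (x + N * Complex.I) ^ 2) = B at *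
      generalize (∫ x in (-N)..N, FF μ (deriv u) (N + x * Complex.I) ^ 2) = D at *
      generalize (∫ x in (-N)..N, FF μ (deriv u) (ε + x * Complex.I) ^ 2) = E at *
      have hE : Complex.I * E = A - B + Complex.I * D := by
        simp only [smul_eq_mul] at hr
        linear_combination -hr
      have hn : ‖E‖ ≤ ‖A‖ + ‖B‖ + ‖D‖ := by
        calc ‖E‖ = ‖Complex.I * E‖ := by simp
          _ ≤ ‖A - B‖ + ‖Complex.I * D‖ := by rw [hE]; exact norm_add_le _ _
          _ ≤ _ := by
            have := norm_sub_le A B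
            simp only [norm_mul, Complex.norm_I, one_mul]
            linarith
      rw [abs_of_nonneg (by linarith)] at e1 e2 e3
      have hk : 0 ≤ C * (1 + N ^ 2)⁻¹ := by positivity
      calc ‖E‖ ≤ C * (1 + N ^ 2)⁻¹ * (4 * N) := by nlinarith
        _ ≤ C * (N ^ 2)⁻¹ * (4 * N) := by gcongr
        _ = _ := by field_simp
    · intro w hw
      refine (hdiff w ?_).differentiableWithinAt
      have := hw.1
      simp only [mem_preimage] at this
      simp at this
      rw [uIcc_of_le hN] at this
      exact hε.trans_le this.1
  exact tendsto_nhds_unique hlim h0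

lemma FF_tendsto {μ : ℝ} (hμ0 : 0 < μ) (hμ1 : μ < 1) {v : ℝ → ℝ} (hv : Continuous v)
    (hc : HasCompactSupport v) (x : ℝ) :
    Tendsto (fun ε : ℝ => FF μ v (ε + x * Complex.I)) (𝓝[>] 0) (𝓝 (FF μ v (x * Complex.I))) := by
  obtain ⟨M, hM⟩ := hv.bounded_above_of_compact_support hc
  have hvC : Continuous (fun s => (v s : ℂ)) := by fun_prop
  unfold FF
  refine tendsto_integral_filter_of_dominated_convergence 
    (fun s => |v s| + M * (k1 μ (x - s) + k1 μ (-(x - s)))) ?_ ?_ 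
    (dom_int hμ1 (hv.integrable_of_hasCompactSupport hc) M x) ?_
  · filter_upwards [self_mem_nhdsWithin] with ε hε
    exact (hvC.mul (cont_pow (by simpa using hε) _)).aestronglyMeasurable
  · refine Eventually.of_forall fun ε => ?_
    filter_upwards [ae_ne' x] with s hs
    simpa using integrand_bound hμ0 hM (ε + x * Complex.I) s (by simpa using hs)
  · filter_upwards [ae_ne' x] with s hs
    refine Tendsto.const_mul _ ?_
    have hmem : (x * Complex.I - s * Complex.I : ℂ) ∈ Complex.slitPlane := by
      right; simpa using sub_ne_zero.2 hs
    have h1 : ContinuousAt (fun ε : ℝ => ((ε : ℂ) + x * Complex.I - s * Complex.I) ^ (((-μ : ℝ)) : ℂ)) 0 :=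
      ContinuousAt.cpow (by fun_prop) (by fun_prop) (by simpa using hmem)
    have h2 := h1.tendsto
    simp only [Complex.ofReal_zero, zero_add] at h2
    exact h2.mono_left nhdsWithin_le_nhds

lemma pow_boundary (μ t : ℝ) (ht : t ≠ 0) :
    ((t : ℂ) * Complex.I) ^ (((-μ : ℝ)) : ℂ) = 
      Complex.exp (-(μ * π / 2 : ℝ) * Complex.I) * kk μ t + Complex.exp ((μ * π / 2 : ℝ) * Complex.I) * kk μ (-t) := by
  have hI : Complex.I ≠ 0 := Complex.I_ne_zero
  rcases lt_or_gt_of_ne ht with h | h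
  · have e : (t : ℂ) * Complex.I = ((-t : ℝ) : ℂ) * (-Complex.I) := by push_cast; ring
    have h' : 0 < -t := by linarith
    have hne : ((-t : ℝ) : ℂ) * (-Complex.I) ≠ 0 :=
      mul_ne_zero (by exact_mod_cast h'.ne') (neg_ne_zero.2 hI)
    rw [e, Complex.cpow_def_of_ne_zero hne, Complex.log_ofReal_mul h' (neg_ne_zero.2 hI),
      Complex.log_neg_I, kk, kk, if_neg (by linarith), if_pos h', Real.rpow_def_of_pos h',
      Complex.ofReal_exp, ← Complex.exp_add, Complex.ofReal_zero, mul_zero, zero_add]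
    congr 1
    push_cast; ring
  · have hne : (t : ℂ) * Complex.I ≠ 0 := mul_ne_zero (by exact_mod_cast h.ne') hI
    rw [Complex.cpow_def_of_ne_zero hne, Complex.log_ofReal_mul h hI,
      Complex.log_I, kk, kk, if_pos h, if_neg (by linarith), Real.rpow_def_of_pos h,
      Complex.ofReal_exp, ← Complex.exp_add, Complex.ofReal_zero, mul_zero, add_zero]
    congr 1
    push_cast; ring

noncomputable def PP (μ : ℝ) (v : ℝ → ℝ) (x : ℝ) : ℝ := ∫ s, kk μ (x - s) * v s

noncomputable def QQ (μ : ℝ) (v : ℝ → ℝ) (x : ℝ) : ℝ := ∫ s, kk μ (-(x - s)) * v s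

lemma kk_neg_loc {μ : ℝ} (hμ0 : 0 < μ) (hμ1 : μ < 1) : LocallyIntegrable (fun t => kk μ (-t)) := by
  have h := kk_loc hμ0 hμ1
  intro x
  obtain ⟨s, hs, hi⟩ := h (-x)
  refine ⟨Neg.neg ⁻¹' s, ?_, ?_⟩
  · exact continuous_neg.continuousAt.preimage_mem_nhds hs
  · exact ((Measure.measurePreserving_neg volume).integrableOn_comp_preimage
      (Homeomorph.neg ℝ).measurableEmbedding).2 hi

lemma conv_int {k : ℝ → ℝ} (hk : LocallyIntegrable k) {v : ℝ → ℝ} (hv : Continuous v)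
    (hc : HasCompactSupport v) (x : ℝ) : Integrable (fun s => k (x - s) * v s) := by
  have h := hc.convolutionExists_right (ContinuousLinearMap.mul ℝ ℝ) hk hv x (μ := volume)
  have h2 := (convolutionExistsAt_iff_integrable_swap).1 h
  simpa using h2

lemma FF_boundary {μ : ℝ} (hμ0 : 0 < μ) (hμ1 : μ < 1) {v : ℝ → ℝ} (hv : Continuous v)
    (hc : HasCompactSupport v) (x : ℝ) :
    FF μ v (x * Complex.I) = Complex.exp (-(μ * π / 2 : ℝ) * Complex.I) * PP μ v x + 
      Complex.exp ((μ * π / 2 : ℝ) * Complex.I) * QQ μ v x := by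
  have hP : Integrable (fun s => ((kk μ (x - s) * v s : ℝ) : ℂ)) :=
    (conv_int (kk_loc hμ0 hμ1) hv hc x).ofReal
  have hQ : Integrable (fun s => ((kk μ (-(x - s)) * v s : ℝ) : ℂ)) :=
    (conv_int (kk_neg_loc hμ0 hμ1) hv hc x).ofReal
  unfold PP QQ
  rw [← integral_complex_ofReal, ← integral_complex_ofReal, ← integral_const_mul,
    ← integral_const_mul, ← integral_add (hP.const_mul _) (hQ.const_mul _)]
  unfold FF
  apply integral_congr_ae
  filter_upwards [ae_ne' x] with s hs
  rw [← sub_mul, ← Complex.ofReal_sub, pow_boundary μ (x - s) (sub_ne_zero.2 hs)]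
  simp only [Complex.ofReal_mul]
  ring

lemma deriv_conv {k : ℝ → ℝ} (hk : LocallyIntegrable k) {u : ℝ → ℝ} (hu : ContDiff ℝ (⊤ : ℕ∞) u) 
    (hc : HasCompactSupport u) (x : ℝ) : 
    deriv (fun y => ∫ s, k (y - s) * u s) x = ∫ s, k (x - s) * deriv u s := by
  have h := hc.hasDerivAt_convolution_right (ContinuousLinearMap.mul ℝ ℝ) hk (hu.of_le (by simp)) x
  have e : ∀ g : ℝ → ℝ, (convolution k g (ContinuousLinearMap.mul ℝ ℝ) volume) = 
      fun y => ∫ s, k (y - s) * g s := by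
    intro g; ext y; rw [convolution_eq_swap]; rfl
  rw [e, e] at h
  exact h.deriv

lemma left_eq_s7 {μ : ℝ} (hμ0 : 0 < μ) (hμ1 : μ < 1) {u : ℝ → ℝ} (hu : ContDiff ℝ (⊤ : ℕ∞) u) 
    (hc : HasCompactSupport u) (x : ℝ) : 
    leftFracDerivR μ u x = (1 / Real.Gamma (1 - μ)) * PP μ (deriv u) x := by
  unfold leftFracDerivR PP
  rw [← deriv_conv (kk_loc hμ0 hμ1) hu hc x]
  congr 2
  ext y
  rw [← integral_indicator measurableSet_Iic]
  congr 1
  ext s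
  unfold kk
  rcases lt_trichotomy s y with h | h | h
  · rw [indicator_of_mem (by exact h.le), if_pos (by linarith)]
  · subst h
    simp [Real.zero_rpow (show -μ ≠ 0 by linarith)]
  · rw [indicator_of_notMem (by simpa using h), if_neg (by linarith), zero_mul]

lemma right_eq_s7 {μ : ℝ} (hμ0 : 0 < μ) (hμ1 : μ < 1) {u : ℝ → ℝ} (hu : ContDiff ℝ (⊤ : ℕ∞) u) 
    (hc : HasCompactSupport u) (x : ℝ) : 
    rightFracDerivR μ u x = -(1 / Real.Gamma (1 - μ)) * QQ μ (deriv u) x := by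
  unfold rightFracDerivR QQ
  rw [← deriv_conv (kk_neg_loc hμ0 hμ1) hu hc x]
  congr 2
  ext y
  rw [← integral_indicator measurableSet_Ici]
  congr 1
  ext s
  unfold kk
  rcases lt_trichotomy s y with h | h | h
  · rw [indicator_of_notMem (by simpa using h), if_neg (by linarith), zero_mul]
  · subst h
    simp [Real.zero_rpow (show -μ ≠ 0 by linarith)]
  · rw [indicator_of_mem (by exact h.le), if_pos (by linarith), neg_sub]

/-- `∫ F² = 0` on the boundary, together with square integrability. -/
lemma boundary_zero {μ : ℝ} (hμ0 : 0 < μ) (hμ1 : μ < 1) {u : ℝ → ℝ} (hu : ContDiff ℝ (⊤ : ℕ∞) u) 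
    (hc : HasCompactSupport u) :
    MemLp (fun x : ℝ => FF μ (deriv u) (x * Complex.I)) 2 ∧
      ∫ x : ℝ, FF μ (deriv u) (x * Complex.I) ^ 2 = 0 := by
  have hdu : Continuous (deriv u) := hu.continuous_deriv (by simp)
  obtain ⟨C, hC, hb⟩ := FF_bound hμ0 hμ1 hu hc
  have hT := FF_tendsto hμ0 hμ1 hdu hc.deriv
  have hcont : ∀ ε : ℝ, 0 < ε → Continuous (fun x : ℝ => FF μ (deriv u) (ε + x * Complex.I)) := by
    intro ε hε
    rw [continuous_iff_continuousAt]
    intro y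
    have h1 := (FF_diff hμ0 hdu hc.deriv (w := ε + y * Complex.I) (by simpa using hε)).continuousAt
    exact ContinuousAt.comp (f := fun y : ℝ => (ε + y * Complex.I : ℂ)) h1 (by fun_prop)
  have hb' : ∀ ε : ℝ, 0 < ε → ∀ x : ℝ, 
      ‖FF μ (deriv u) (ε + x * Complex.I)‖ ^ 2 ≤ C * (1 + x ^ 2)⁻¹ := by
    intro ε hε x
    refine (hb _ (by simpa using hε)).trans (one_add_im_le _ hC ?_)
    simpa using Complex.abs_im_le_norm (ε + x * Complex.I)
  have hev : ∀ᶠ n : ℕ in atTop, (0 : ℝ) < 1 / ((n : ℝ) + 1) := 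
    Eventually.of_forall fun n => by positivity
  have hseq : Tendsto (fun n : ℕ => 1 / ((n : ℝ) + 1)) atTop (𝓝[>] 0) :=
    tendsto_nhdsWithin_iff.2 ⟨tendsto_one_div_add_atTop_nhds_zero_nat, hev⟩
  have hmeas : AEStronglyMeasurable (fun x : ℝ => FF μ (deriv u) (x * Complex.I)) volume :=
    aestronglyMeasurable_of_tendsto_ae atTop 
      (f := fun (n : ℕ) (x : ℝ) => FF μ (deriv u) ((1 / ((n : ℝ) + 1) : ℝ) + x * Complex.I))
      (fun n => (hcont _ (by positivity)).aestronglyMeasurable)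
      (Eventually.of_forall fun x => (hT x).comp hseq)
  constructor
  · rw [memLp_two_iff_integrable_sq_norm hmeas]
    refine (integrable_inv_one_add_sq.const_mul C).mono' (by fun_prop) 
      (Eventually.of_forall fun x => ?_)
    rw [norm_pow, norm_norm]
    refine le_of_tendsto (((hT x).norm).pow 2) ?_
    filter_upwards [self_mem_nhdsWithin] with ε hε using hb' ε hε x
  · have h1 : Tendsto (fun ε : ℝ => ∫ x : ℝ, FF μ (deriv u) (ε + x * Complex.I) ^ 2) (𝓝[>] 0)
        (𝓝 (∫ x : ℝ, FF μ (deriv u) (x * Complex.I) ^ 2)) := by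
      refine tendsto_integral_filter_of_dominated_convergence (fun x => C * (1 + x ^ 2)⁻¹) ?_ ?_
        (integrable_inv_one_add_sq.const_mul C) ?_
      · filter_upwards [self_mem_nhdsWithin] with ε hε
        exact ((hcont ε hε).pow 2).aestronglyMeasurable
      · filter_upwards [self_mem_nhdsWithin] with ε hε
        refine Eventually.of_forall fun x => ?_
        rw [norm_pow]
        exact hb' ε hε x
      · exact Eventually.of_forall fun x => (hT x).pow 2
    refine tendsto_nhds_unique (h1.congr' (f₂ := fun _ => (0 : ℂ)) ?_) tendsto_const_nhds
    filter_upwards [self_mem_nhdsWithin] with ε hε using FF_int_zero hμ0 hμ1 hu hc hε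

lemma exp_pos_eq (a : ℝ) : Complex.exp ((a : ℝ) * Complex.I) = ⟨Real.cos a, Real.sin a⟩ := by
  apply Complex.ext
  · rw [Complex.exp_ofReal_mul_I_re]
  · rw [Complex.exp_ofReal_mul_I_im]

lemma exp_neg_eq (a : ℝ) : Complex.exp (-(a : ℝ) * Complex.I) = ⟨Real.cos a, -Real.sin a⟩ := by
  rw [← Complex.ofReal_neg, exp_pos_eq, Real.cos_neg, Real.sin_neg]

/-- For `μ ∈ (0,1)`, `μ ≠ 1/2`, and `u` smooth with compact support,
`( {}_{-∞}D_x^μ u , {}_xD_∞^μ u )_{L²(ℝ)} = cos(μπ) ‖ {}_{-∞}D_x^μ u ‖²_{L²(ℝ)}`. -/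
theorem inner_left_right_fracDeriv
    (μ : ℝ) (u : ℝ → ℝ)
    (hμ0 : 0 < μ) (hμ1 : μ < 1) (hμhalf : μ ≠ 1 / 2)
    (hu : ContDiff ℝ (⊤ : ℕ∞) u) (hsupp : HasCompactSupport u) :
    ∫ x : ℝ, leftFracDerivR μ u x * rightFracDerivR μ u x
      = Real.cos (μ * Real.pi) * ∫ x : ℝ, (leftFracDerivR μ u x) ^ 2 := by
  have hdu : Continuous (deriv u) := hu.continuous_deriv (by simp)
  obtain ⟨hL2, hzero⟩ := boundary_zero hμ0 hμ1 hu hsupp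
  have hG := FF_boundary hμ0 hμ1 hdu hsupp.deriv
  set G : ℝ → ℂ := fun x : ℝ => FF μ (deriv u) (x * Complex.I) with hGdef
  set P := PP μ (deriv u)
  set Q := QQ μ (deriv u)
  set a := μ * π / 2 with ha
  have h2a : μ * π = 2 * a := by rw [ha]; ring
  have hs : 0 < Real.sin (2 * a) := by
    rw [← h2a]
    apply Real.sin_pos_of_pos_of_lt_pi (by positivity)
    nlinarith [Real.pi_pos]
  have hGre : ∀ x, (G x).re = Real.cos a * P x + Real.cos a * Q x := by
    intro x; simp only [hGdef, hG, exp_pos_eq, exp_neg_eq]; simp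
  have hGim : ∀ x, (G x).im = -Real.sin a * P x + Real.sin a * Q x := by
    intro x; simp only [hGdef, hG, exp_pos_eq, exp_neg_eq]; simp
  have hre : MemLp (fun x => (G x).re) 2 := hL2.re
  have him : MemLp (fun x => (G x).im) 2 := hL2.im
  have hsc := Real.sin_sq_add_cos_sq a
  have hPL : MemLp P 2 := by
    have : P = fun x => (Real.sin (2 * a))⁻¹ * (Real.sin a * (G x).re - Real.cos a * (G x).im) := by
      ext x
      rw [hGre, hGim, Real.sin_two_mul] 
      rw [Real.sin_two_mul] at hs
      rw [eq_inv_mul_iff_mul_eq₀ hs.ne']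
      ring
    rw [this]
    exact ((hre.const_mul _).sub (him.const_mul _)).const_mul _
  have hQL : MemLp Q 2 := by
    have : Q = fun x => (Real.sin (2 * a))⁻¹ * (Real.sin a * (G x).re + Real.cos a * (G x).im) := by
      ext x
      rw [hGre, hGim, Real.sin_two_mul] 
      rw [Real.sin_two_mul] at hs
      rw [eq_inv_mul_iff_mul_eq₀ hs.ne']
      ring
    rw [this]
    exact ((hre.const_mul _).add (him.const_mul _)).const_mul _
  have hPi := hPL.integrable_sq
  have hQi := hQL.integrable_sq
  have hPQ : Integrable (fun x => P x * Q x) := hPL.integrable_mul hQL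
  have hG2 : Integrable (fun x => G x ^ 2) := by
    simp only [sq]
    exact hL2.integrable_mul hL2
  have zre : ∫ x, (G x ^ 2).re = 0 := by
    have := Complex.reCLM.integral_comp_comm hG2
    simp only [Complex.reCLM_apply] at this
    rw [this, hzero]; simp
  have zim : ∫ x, (G x ^ 2).im = 0 := by
    have := Complex.imCLM.integral_comp_comm hG2
    simp only [Complex.imCLM_apply] at this
    rw [this, hzero]; simp
  have ere : ∀ x, (G x ^ 2).re = (Real.cos (2 * a) * P x ^ 2 + Real.cos (2 * a) * Q x ^ 2) + 2 * (P x * Q x) := by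
    intro x
    rw [sq, Complex.mul_re, hGre, hGim, Real.cos_two_mul]
    linear_combination (2 * P x * Q x - P x ^ 2 - Q x ^ 2) * hsc
  have eim : ∀ x, (G x ^ 2).im = Real.sin (2 * a) * Q x ^ 2 - Real.sin (2 * a) * P x ^ 2 := by
    intro x
    rw [sq, Complex.mul_im, hGre, hGim, Real.sin_two_mul]
    ring
  simp only [ere] at zre
  simp only [eim] at zim
  rw [integral_add (by exact (hPi.const_mul _).add (hQi.const_mul _)) (hPQ.const_mul _), 
    integral_add (hPi.const_mul _) (hQi.const_mul _), integral_const_mul, integral_const_mul,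
    integral_const_mul] at zre
  rw [integral_sub (hQi.const_mul _) (hPi.const_mul _), integral_const_mul, integral_const_mul,
    ← mul_sub] at zim
  have hPQeq : (∫ x, Q x ^ 2) = ∫ x, P x ^ 2 := by
    rcases mul_eq_zero.1 zim with h | h
    · exact absurd h hs.ne'
    · linarith
  simp only [left_eq_s7 hμ0 hμ1 hu hsupp, right_eq_s7 hμ0 hμ1 hu hsupp]
  have e1 : ∀ x, (1 / Real.Gamma (1 - μ)) * P x * (-(1 / Real.Gamma (1 - μ)) * Q x) =
      -(1 / Real.Gamma (1 - μ)) ^ 2 * (P x * Q x) := fun x => by ring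
  have e2 : ∀ x, ((1 / Real.Gamma (1 - μ)) * P x) ^ 2 =
      (1 / Real.Gamma (1 - μ)) ^ 2 * (P x ^ 2) := fun x => by ring
  change ∫ x, (1 / Real.Gamma (1 - μ)) * P x * (-(1 / Real.Gamma (1 - μ)) * Q x) =
    Real.cos (μ * π) * ∫ x, ((1 / Real.Gamma (1 - μ)) * P x) ^ 2
  simp only [e1, e2]
  rw [integral_const_mul, integral_const_mul, h2a]
  rw [hPQeq] at zre
  linear_combination (-(1 / Real.Gamma (1 - μ)) ^ 2 / 2) * zre
end
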